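/- arXiv:2401.00079 — 9 statements merged into one kernel-verified Lean document; each statement's English description precedes it below -/
import Mathlib

section
/- Every weakly Hopfian finitely presented group is strongly defined by its ∃⁺-types. Precisely: let G be a weakly Hopfian group with finite presentation ⟨a | r⟩. Then every ∃⁺-embedding f : G →* G is an automorphism of G (i.e. f is bijective). -/
/-!
An `∃⁺`-embedding `f` of a finitely presented group `⟨a | r⟩` has a left inverse. Write
`f (a i) = w i (a)` for words `w i`. The finite system `r (x) = 1`, `w (x) = g` with parameters
`g = f (a)` is solved by `x = a`, so, as `f` reflects solvability, it has a solution `x` with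
parameters `g = a`. Since `x` satisfies the relators, `a ↦ x` extends to an endomorphism `h`, and
`h (f (a i)) = h (w i (a)) = w i (x) = a i`, that is, `h ∘ f = id`. Weak Hopficity then makes `f`
bijective.
-/

/-- Every weakly Hopfian finitely presented group is strongly defined by its
`∃⁺`-types: every `∃⁺`-embedding `f : G →* G` is an automorphism. -/
theorem stmt_1 (G : Type*) [Group G]
    (hwHopf : ∀ f : G →* G, (∃ g : G →* G, g.comp f = MonoidHom.id G) → Function.Bijective f)
    (n m : ℕ) (a : Fin n → G)
    (hgen : Subgroup.closure (Set.range a) = ⊤)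
    (r : Fin m → FreeGroup (Fin n))
    (hker : (FreeGroup.lift a).ker = Subgroup.normalClosure (Set.range r))
    (f : G →* G)
    (hf : ∀ (k N p : ℕ) (u : Fin N → FreeGroup (Fin k ⊕ Fin p)) (g : Fin p → G),
      (∃ x : Fin k → G, ∀ j, FreeGroup.lift (Sum.elim x g) (u j) = 1) ↔
        (∃ x : Fin k → G, ∀ j, FreeGroup.lift (Sum.elim x (⇑f ∘ g)) (u j) = 1)) :
    Function.Bijective f := by
  have hsurj : Function.Surjective (FreeGroup.lift a) := by
    rw [← MonoidHom.range_eq_top, FreeGroup.range_lift_eq_closure, hgen]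
  choose w hw using fun i => hsurj (f (a i))
  -- The system `r j (x) = 1`, `w i (x) = g i` in unknowns `x` and parameters `g`.
  let u : Fin (m + n) → FreeGroup (Fin n ⊕ Fin n) :=
    Fin.append (fun j => FreeGroup.map Sum.inl (r j))
      (fun i => FreeGroup.map Sum.inl (w i) * (FreeGroup.of (Sum.inr i))⁻¹)
  have hlift (x g : Fin n → G) (v : FreeGroup (Fin n)) :
      FreeGroup.lift (Sum.elim x g) (FreeGroup.map Sum.inl v) = FreeGroup.lift x v := by
    rw [← MonoidHom.comp_apply]
    congr 1
    ext i
    simp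
  have hr (j : Fin m) : FreeGroup.lift a (r j) = 1 := by
    rw [← MonoidHom.mem_ker, hker]
    exact Subgroup.subset_normalClosure ⟨j, rfl⟩
  -- With parameters `f ∘ a` the system is solved by `a`, hence it is solvable with parameters `a`.
  obtain ⟨x, hx⟩ := (hf n (m + n) n u a).2 ⟨a, fun j => by
    refine Fin.addCases (fun j => ?_) (fun i => ?_) j
    · simp [u, hlift, hr]
    · simp [u, hlift, hw]⟩
  have hxr (j : Fin m) : FreeGroup.lift x (r j) = 1 := by
    simpa [u, hlift] using hx (Fin.castAdd n j)
  have hxw (i : Fin n) : FreeGroup.lift x (w i) = a i := by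
    simpa [u, hlift, mul_inv_eq_one] using hx (Fin.natAdd m i)
  have hle : (FreeGroup.lift a).ker ≤ (FreeGroup.lift x).ker := by
    rw [hker]
    refine Subgroup.normalClosure_le_normal ?_
    rintro _ ⟨j, rfl⟩
    exact hxr j
  let h : G →* G := (FreeGroup.lift a).liftOfSurjective hsurj ⟨FreeGroup.lift x, hle⟩
  have hh (v : FreeGroup (Fin n)) : h (FreeGroup.lift a v) = FreeGroup.lift x v :=
    MonoidHom.liftOfRightInverse_comp_apply _ _ _ ⟨FreeGroup.lift x, hle⟩ v
  refine hwHopf f ⟨h, MonoidHom.eq_of_eqOn_dense hgen ?_⟩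
  rintro _ ⟨i, rfl⟩
  simp [← hw, hh, hxw]
end

section
/- (Conclusion 2.12, independence of the generating tuple.) Let G be a computable Hopfian group with finite presentation ⟨a | r⟩. If the automorphism orbit { b : Fin n → G | ∃ α : G ≃* G, ∀ i, α (a i) = b i } of a is a computable subset of Fin n → G, then for every k : ℕ and every generating tuple c : Fin k → G (i.e. the subgroup generated by the range of c is all of G), the automorphism orbit { d : Fin k → G | ∃ α : G ≃* G, ∀ i, α (c i) = d i } is a computable subset of Fin k → G. In other words, the weak Whitehead problem is decidable for one finite generating tuple of G if and only if it is decidable for all of them. -/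
/-!
Write `c i = w i (a)` and `a j = v j (c)` for words `w i`, `v j` in free groups. For a tuple `d`
put `b j = v j (d)`. Then `d` lies in the automorphism orbit of `c` if and only if `b` lies in the
automorphism orbit of `a` and `d i = w i (b)` for all `i`: an automorphism commutes with evaluating
words, so one taking `c` to `d` takes `a` to `b`, and one taking `a` to `b` takes `c i = w i (a)`
to `w i (b)`. Evaluating a fixed word is computable (`computable_lift_apply`), so the right-hand
condition is decidable.
-/

/-- Evaluating a fixed word of the free group on a variable tuple is computable. -/
theorem computable_lift_apply {G : Type*} [Group G] [Primcodable G]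
    (hmul : Computable fun p : G × G => p.1 * p.2)
    (hinv : Computable fun g : G => g⁻¹) {k : ℕ} (w : FreeGroup (Fin k)) :
    Computable fun d : Fin k → G => FreeGroup.lift d w := by
  have hgen (i : Fin k) : Computable fun d : Fin k → G => d i :=
    (Primrec.fin_app.comp Primrec.id (Primrec.const i)).to_comp
  induction w using FreeGroup.induction_on with
  | C1 => simpa using Computable.const (1 : G)
  | of i => simpa using hgen i
  | inv_of i _ => simpa using hinv.comp (hgen i)
  | mul x y hx hy => simpa using hmul.comp (hx.pair hy)

/-- A finite tuple of computable functions is computable as a function into the tuple type. -/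
theorem computable_tuple {α σ : Type*} [Primcodable α] [Primcodable σ] {n : ℕ}
    {f : Fin n → α → σ} (hf : ∀ i, Computable (f i)) : Computable fun x i => f i x := by
  have h : Primrec (Equiv.vectorEquivFin σ n) := Primrec.of_equiv_symm
  refine (h.to_comp.comp (Computable.vector_ofFn hf)).of_eq fun x => ?_
  ext i
  simp [Equiv.vectorEquivFin]

theorem ComputablePred.comp_computable {α β : Type*} [Primcodable α] [Primcodable β]
    {p : β → Prop} (hp : ComputablePred p) {f : α → β} (hf : Computable f) :
    ComputablePred fun x => p (f x) := by
  obtain ⟨_, hp⟩ := hp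
  exact ⟨fun x => inferInstance, hp.comp hf⟩

theorem ComputablePred.and_computablePred {α : Type*} [Primcodable α] {p q : α → Prop}
    (hp : ComputablePred p) (hq : ComputablePred q) : ComputablePred fun x => p x ∧ q x := by
  obtain ⟨_, hp⟩ := hp
  obtain ⟨_, hq⟩ := hq
  exact ⟨fun x => inferInstance,
    (Primrec.and.to_comp.comp hp hq).of_eq fun x => by simp⟩

theorem ComputablePred.forall_mem_finset {α ι : Type*} [Primcodable α] {p : ι → α → Prop}
    (hp : ∀ i, ComputablePred (p i)) (s : Finset ι) : ComputablePred fun x => ∀ i ∈ s, p i x := by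
  classical
  induction s using Finset.induction_on with
  | empty => exact ⟨fun _ => isTrue (by simp), (Computable.const true).of_eq fun x => by simp⟩
  | insert i s _ ih => exact ((hp i).and_computablePred ih).of_eq fun x => by simp

/-- Every element is the value of a word at a generating tuple. -/
theorem exists_lift_eq_of_closure_eq_top {G : Type*} [Group G] {n : ℕ} {a : Fin n → G}
    (h : Subgroup.closure (Set.range a) = ⊤) (g : G) :
    ∃ w : FreeGroup (Fin n), FreeGroup.lift a w = g := by
  rw [← MonoidHom.mem_range, FreeGroup.range_lift_eq_closure, h]
  trivial

theorem map_lift_apply {G : Type*} [Group G] {n : ℕ} (α : G ≃* G) {a b : Fin n → G}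
    (h : ∀ i, α (a i) = b i) (w : FreeGroup (Fin n)) :
    α (FreeGroup.lift a w) = FreeGroup.lift b w := by
  have : α.toMonoidHom.comp (FreeGroup.lift a) = FreeGroup.lift b := by
    ext i
    simp [h]
  exact DFunLike.congr_fun this w

/-- Conclusion 2.12: for a computable Hopfian finitely presented group,
if the automorphism orbit of the distinguished generating tuple is computable, then the
automorphism orbit of every finite generating tuple is computable. -/
theorem stmt_2 (G : Type*) [Group G] [Primcodable G]
    (hmul : Computable fun p : G × G => p.1 * p.2)
    (hinv : Computable fun g : G => g⁻¹)
    (heq : ComputablePred fun p : G × G => p.1 = p.2)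
    (hHopf : ∀ f : G →* G, Function.Surjective f → Function.Bijective f)
    (n m : ℕ) (a : Fin n → G)
    (hgen : Subgroup.closure (Set.range a) = ⊤)
    (r : Fin m → FreeGroup (Fin n))
    (hker : (FreeGroup.lift a).ker = Subgroup.normalClosure (Set.range r))
    (horb : ComputablePred fun b : Fin n → G => ∃ α : G ≃* G, ∀ i, α (a i) = b i) :
    ∀ (k : ℕ) (c : Fin k → G), Subgroup.closure (Set.range c) = ⊤ →
      ComputablePred fun d : Fin k → G => ∃ α : G ≃* G, ∀ i, α (c i) = d i := by
  intro k c hc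
  choose w hw using fun i => exists_lift_eq_of_closure_eq_top hgen (c i)
  choose v hv using fun j => exists_lift_eq_of_closure_eq_top hc (a j)
  have hb : Computable fun (d : Fin k → G) j => FreeGroup.lift d (v j) :=
    computable_tuple fun j => computable_lift_apply hmul hinv (v j)
  have hwords (i : Fin k) : ComputablePred fun d : Fin k → G =>
      FreeGroup.lift (fun j => FreeGroup.lift d (v j)) (w i) = d i :=
    heq.comp_computable (((computable_lift_apply hmul hinv (w i)).comp hb).pair
      (Primrec.fin_app.comp Primrec.id (Primrec.const i)).to_comp)
  refine ((horb.comp_computable hb).and_computablePred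
    (ComputablePred.forall_mem_finset hwords Finset.univ)).of_eq fun d => ?_
  constructor
  · rintro ⟨⟨α, hα⟩, hd⟩
    exact ⟨α, fun i => by rw [← hw i, map_lift_apply α hα, hd i (Finset.mem_univ i)]⟩
  · rintro ⟨α, hα⟩
    have hab (j : Fin n) : α (a j) = FreeGroup.lift d (v j) := by
      rw [← hv j, map_lift_apply α hα]
    exact ⟨⟨α, hab⟩, fun i _ => by rw [← map_lift_apply α hab, hw i, hα i]⟩
end

section
/- (Lemma 2.4.) For all tuples b̄, c̄ : Fin n → A, the following are equivalent: (1) T(b̄) ⊆ T(c̄); (2) there exists an L-homomorphism φ : A → A such that φ (b̄ i) = c̄ i for all i. -/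
/-!
If `T(b̄) ⊆ T(c̄)`, write `b̄ = t̄(ā)` with terms `t̄`, which is possible because `ā` generates `A`.
Then `t̄ ∈ T(b̄) ⊆ T(c̄)`, so `c̄ = t̄(d̄)` for some `d̄` satisfying `ψ`, and the endomorphism sending
`ā` to `d̄` sends `b̄` to `c̄`. Conversely, if `φ` sends `b̄` to `c̄` and `b̄ = t̄(d̄)` with `ψ(d̄)`, then
`c̄ = t̄(φ d̄)`, and `ψ(φ d̄)` because `ψ` is preserved by homomorphisms.

The last step needs care with universes: preservation is assumed for structures in two universes
unrelated to that of `A`. Since `ψ` mentions finitely many symbols, a Löwenheim–Skolem argument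
(`exists_ops_formula`) replaces `A` by a countable subset closed under `φ`. This subset need not be
closed under all function symbols of `L`, but the symbols under which it is not closed do not occur
in `ψ` and can be reinterpreted as constants. Countable structures have copies in every universe,
so the hypothesis applies to them (`preserved_endo`).
-/

open FirstOrder Language

/-- A set of finitary operations on `A`. -/
abbrev OpSet (A : Type*) := Set (Σ k : ℕ, ((Fin k → A) → A))

/-- `S` is closed under every operation in `F`. -/
def IsOpClosed {A : Type*} (F : OpSet A) (S : Set A) : Prop :=
  ∀ p ∈ F, ∀ x : Fin p.1 → A, (∀ i, x i ∈ S) → p.2 x ∈ S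

theorem IsOpClosed.mono {A : Type*} {F G : OpSet A} {S : Set A} (h : IsOpClosed G S)
    (hFG : F ⊆ G) : IsOpClosed F S :=
  fun p hp => h p (hFG hp)

theorem exists_countable_closed {A : Type*} (F : OpSet A) (hF : F.Countable) (s : Set A)
    (hs : s.Countable) : ∃ S : Set A, S.Countable ∧ s ⊆ S ∧ IsOpClosed F S := by
  let E : FirstOrder.Language.{_, 0} := ⟨fun k => {g : (Fin k → A) → A // (⟨k, g⟩ : Σ k : ℕ, ((Fin k → A) → A)) ∈ F},
    fun _ => PEmpty⟩
  let : E.Structure A := ⟨fun g => g.1, fun r => r.elim⟩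
  have : Countable (Σ k, E.Functions k) := by
    have := hF.to_subtype
    refine Function.Injective.countable
      (f := fun p : (Σ k, E.Functions k) => (⟨⟨p.1, p.2.1⟩, p.2.2⟩ : F)) ?_
    rintro ⟨k, g, hg⟩ ⟨l, h, hh⟩ hgh
    simp only [Subtype.mk.injEq] at hgh
    cases hgh
    rfl
  have := hs.to_subtype
  refine ⟨Substructure.closure E s, ?_, Substructure.subset_closure, ?_⟩
  · rw [Substructure.coe_closure_eq_range_term_realize]
    exact Set.countable_range _
  · rintro ⟨k, g⟩ hp x hx
    exact (Substructure.closure E s).fun_mem (⟨g, hp⟩ : E.Functions k) x hx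

open Classical in
/-- The `L`-structure on a subset `S` of `A` in which relations are restricted, operations under
which `S` is closed are restricted, and all other operations are constantly `s₀`. -/
@[reducible] noncomputable def truncStructure {L : Language} {A : Type*} [L.Structure A]
    (S : Set A) (s₀ : S) : L.Structure S where
  funMap {k} g x :=
    if h : ∀ y : Fin k → A, (∀ i, y i ∈ S) → Structure.funMap g y ∈ S then
      ⟨Structure.funMap g fun i => (x i : A), h _ fun i => (x i).2⟩
    else s₀
  RelMap r x := Structure.RelMap r fun i => (x i : A)

theorem truncStructure_funMap_pos {L : Language} {A : Type*} [L.Structure A] {S : Set A} (s₀ : S)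
    {k : ℕ} {g : L.Functions k}
    (h : ∀ y : Fin k → A, (∀ i, y i ∈ S) → Structure.funMap g y ∈ S) (x : Fin k → S) :
    letI := truncStructure (L := L) S s₀
    Structure.funMap g x = (⟨Structure.funMap g fun i => (x i : A), h _ fun i => (x i).2⟩ : S) :=
  dif_pos h

theorem truncStructure_funMap_neg {L : Language} {A : Type*} [L.Structure A] {S : Set A} (s₀ : S)
    {k : ℕ} {g : L.Functions k}
    (h : ¬ ∀ y : Fin k → A, (∀ i, y i ∈ S) → Structure.funMap g y ∈ S) (x : Fin k → S) :
    letI := truncStructure (L := L) S s₀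
    Structure.funMap g x = s₀ :=
  dif_neg h

/-- On sets closed under countably many operations depending on `t`, the truncated structure
evaluates `t` as `A` does. -/
theorem exists_ops_term {L : Language} {A : Type*} [L.Structure A] {α : Type*} (t : L.Term α) :
    ∃ F : OpSet A, F.Countable ∧ ∀ S, IsOpClosed F S → ∀ (s₀ : S) (v : α → S),
      letI := truncStructure (L := L) S s₀
      ((t.realize v : S) : A) = t.realize fun i => (v i : A) := by
  induction t with
  | var i => exact ⟨∅, Set.countable_empty, fun _ _ _ _ => rfl⟩
  | @func k g ts ih =>
    choose F hF h using ih
    refine ⟨insert ⟨k, Structure.funMap g⟩ (⋃ i, F i),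
      (Set.countable_iUnion hF).insert _, fun S hS s₀ v => ?_⟩
    have hg := hS _ (Set.mem_insert _ _)
    have hts i := h i S
      (hS.mono ((Set.subset_iUnion F i).trans (Set.subset_insert _ _))) s₀ v
    simp only [Term.realize]
    rw [truncStructure_funMap_pos s₀ hg]
    simp only [hts]

/-- A Löwenheim–Skolem lemma for a single formula: on sets closed under countably many operations
depending on `φ` (its function symbols and Skolem functions for its quantifiers), the truncated
structure satisfies `φ` exactly when `A` does. The language may be of any cardinality. -/
theorem exists_ops_formula {L : Language} {A : Type*} [L.Structure A] [Nonempty A] {n m : ℕ}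
    (φ : L.BoundedFormula (Fin n) m) :
    ∃ F : OpSet A, F.Countable ∧ ∀ S, IsOpClosed F S →
      ∀ (s₀ : S) (v : Fin n → S) (xs : Fin m → S),
      letI := truncStructure (L := L) S s₀
      φ.Realize v xs ↔ φ.Realize (fun i => (v i : A)) (fun i => (xs i : A)) := by
  induction φ with
  | falsum => exact ⟨∅, Set.countable_empty, fun _ _ _ _ _ => Iff.rfl⟩
  | equal t₁ t₂ =>
    obtain ⟨F₁, hF₁, h₁⟩ := exists_ops_term (A := A) t₁
    obtain ⟨F₂, hF₂, h₂⟩ := exists_ops_term (A := A) t₂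
    refine ⟨F₁ ∪ F₂, hF₁.union hF₂, fun S hS s₀ v xs => ?_⟩
    have e : (fun i => ((Sum.elim v xs i : S) : A))
        = Sum.elim (fun i => (v i : A)) (fun i => (xs i : A)) := by
      ext i; cases i <;> rfl
    have e₁ := h₁ S (hS.mono Set.subset_union_left) s₀ (Sum.elim v xs)
    have e₂ := h₂ S (hS.mono Set.subset_union_right) s₀ (Sum.elim v xs)
    simp only [BoundedFormula.Realize]
    rw [← e, ← e₁, ← e₂, Subtype.ext_iff]
  | rel r ts =>
    choose F hF h using fun i => exists_ops_term (A := A) (ts i)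
    refine ⟨⋃ i, F i, Set.countable_iUnion hF, fun S hS s₀ v xs => ?_⟩
    have e : (fun i => ((Sum.elim v xs i : S) : A))
        = Sum.elim (fun i => (v i : A)) (fun i => (xs i : A)) := by
      ext i; cases i <;> rfl
    have hts i := h i S (hS.mono (Set.subset_iUnion F i)) s₀ (Sum.elim v xs)
    simp only [BoundedFormula.Realize]
    simp only [← e, ← hts]
    rfl
  | imp φ₁ φ₂ ih₁ ih₂ =>
    obtain ⟨F₁, hF₁, h₁⟩ := ih₁
    obtain ⟨F₂, hF₂, h₂⟩ := ih₂
    refine ⟨F₁ ∪ F₂, hF₁.union hF₂, fun S hS s₀ v xs => ?_⟩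
    exact imp_congr (h₁ S (hS.mono Set.subset_union_left) s₀ v xs)
      (h₂ S (hS.mono Set.subset_union_right) s₀ v xs)
  | @all m φ ih =>
    obtain ⟨F, hF, h⟩ := ih
    -- A Skolem function: if `φ` has a counterexample over the parameters `y`, then `sk y` is one.
    have hsk : ∀ y : Fin (n + m) → A, ∃ x : A,
        φ.Realize (fun i => y (Fin.castAdd m i)) (Fin.snoc (fun i => y (Fin.natAdd n i)) x) →
        ∀ x, φ.Realize (fun i => y (Fin.castAdd m i))
          (Fin.snoc (fun i => y (Fin.natAdd n i)) x) := by
      intro y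
      by_contra! hy
      obtain ⟨-, x, hx⟩ := hy (Classical.arbitrary A)
      exact hx (hy x).1
    choose sk hsk using hsk
    refine ⟨insert ⟨n + m, sk⟩ F, hF.insert _, fun S hS s₀ v xs => ?_⟩
    have hcl := hS.mono (Set.subset_insert _ _)
    have e (x : S) : (fun i => ((Fin.snoc xs x : Fin (m + 1) → S) i : A))
        = Fin.snoc (fun i => (xs i : A)) (x : A) := by
      ext i
      refine Fin.lastCases ?_ (fun i => ?_) i <;> simp
    have hφ (x : S) := h S hcl s₀ v (Fin.snoc xs x)
    simp only [e] at hφ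
    simp only [BoundedFormula.Realize]
    simp only [hφ]
    refine ⟨fun H => ?_, fun H x => H x⟩
    let y : Fin (n + m) → A := Fin.append (fun i => (v i : A)) (fun i => (xs i : A))
    have hy : sk y ∈ S := by
      refine hS _ (Set.mem_insert _ _) y fun i => ?_
      refine Fin.addCases (fun i => ?_) (fun i => ?_) i <;> simp [y]
    have := hsk y
    simp only [y, Fin.append_left, Fin.append_right] at this
    exact this (H ⟨_, hy⟩)

universe u v

/-- Preservation on `Type u` and `Type v` extends to all structures isomorphic to ones there. -/
theorem preserved_small {L : Language} {n : ℕ} {ψ : L.Formula (Fin n)}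
    (hpreserve : ∀ (M : Type u) (N : Type v) [L.Structure M] [L.Structure N]
      (f : M →[L] N) (x : Fin n → M), ψ.Realize x → ψ.Realize (⇑f ∘ x))
    {M N : Type*} [L.Structure M] [L.Structure N] [Small.{u} M] [Small.{v} N]
    (f : M →[L] N) (x : Fin n → M) (hx : ψ.Realize x) : ψ.Realize (⇑f ∘ x) := by
  let : L.Structure (Shrink.{u} M) := (equivShrink M).inducedStructure
  let : L.Structure (Shrink.{v} N) := (equivShrink N).inducedStructure
  let iM : M ≃[L] Shrink.{u} M := (equivShrink M).inducedStructureEquiv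
  let iN : N ≃[L] Shrink.{v} N := (equivShrink N).inducedStructureEquiv
  have h := hpreserve _ _ (iN.toHom.comp (f.comp iM.symm.toHom)) (iM ∘ x)
    ((StrongHomClass.realize_formula iM ψ).2 hx)
  have e : ⇑(iN.toHom.comp (f.comp iM.symm.toHom)) ∘ (iM ∘ x) = iN ∘ (f ∘ x) := by
    funext i
    simp
  rw [e] at h
  exact (StrongHomClass.realize_formula iN ψ).1 h

/-- Preservation in the universes `u` and `v` gives preservation under endomorphisms of `A`,
whatever the universe of `A`: pass to a countable subset of `A` that is closed under `f`, contains
the given tuple, and on which the truncated structures agree with `A` about `ψ`. -/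
theorem preserved_endo {L : Language} {A : Type*} [L.Structure A] {n : ℕ}
    {ψ : L.Formula (Fin n)}
    (hpreserve : ∀ (M : Type u) (N : Type v) [L.Structure M] [L.Structure N]
      (f : M →[L] N) (x : Fin n → M), ψ.Realize x → ψ.Realize (⇑f ∘ x))
    (f : A →[L] A) (a : Fin n → A) (ha : ψ.Realize a) : ψ.Realize (⇑f ∘ a) := by
  rcases isEmpty_or_nonempty A with hA | ⟨⟨a₀⟩⟩
  · rwa [show ⇑f ∘ a = a from funext fun i => hA.elim (a i)]
  have : Nonempty A := ⟨a₀⟩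
  obtain ⟨F, hF, hψ⟩ := exists_ops_formula (A := A) ψ
  obtain ⟨S, hSc, hsS, hS⟩ := exists_countable_closed (insert ⟨1, fun x => f (x 0)⟩ F)
    (hF.insert _) (insert a₀ (Set.range a)) ((Set.countable_range a).insert _)
  have hfS : ∀ x ∈ S, f x ∈ S := fun x hx =>
    hS _ (Set.mem_insert _ _) (fun _ => x) fun _ => hx
  have hψS := hψ S (hS.mono (Set.subset_insert _ _))
  let s₀ : S := ⟨a₀, hsS (Set.mem_insert _ _)⟩
  let f' : S → S := fun x => ⟨f x, hfS x x.2⟩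
  let a' : Fin n → S := fun i => ⟨a i, hsS (Set.mem_insert_of_mem _ ⟨i, rfl⟩)⟩
  have := hSc.to_subtype
  -- The default value in the codomain is `f a₀`, so that `f` also commutes with those symbols whose
  -- interpretation was replaced by a constant.
  let f₁ := @Hom.mk L S S (truncStructure S s₀) (truncStructure S (f' s₀)) f'
    (by
      intro k g x
      by_cases h : ∀ y : Fin k → A, (∀ i, y i ∈ S) → Structure.funMap g y ∈ S
      · refine (congrArg f' (truncStructure_funMap_pos s₀ h x)).trans
          (Eq.trans ?_ (truncStructure_funMap_pos (f' s₀) h (f' ∘ x)).symm)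
        exact Subtype.ext (f.map_fun g _)
      · exact (congrArg f' (truncStructure_funMap_neg s₀ h x)).trans
          (truncStructure_funMap_neg (f' s₀) h (f' ∘ x)).symm)
    (fun r x hx => f.map_rel r _ hx)
  have hψS' (s : S) (x : Fin n → S) :
      letI := truncStructure (L := L) S s
      ψ.Realize x ↔ ψ.Realize fun i => (x i : A) := by
    refine (hψS s x default).trans ?_
    rw [Formula.Realize, Subsingleton.elim (fun i => ((default : Fin 0 → S) i : A)) default]
  exact (hψS' (f' s₀) (f' ∘ a')).1 (@preserved_small L n ψ hpreserve S S (truncStructure S s₀)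
    (truncStructure S (f' s₀)) _ _ f₁ a' ((hψS' s₀ a').2 ha))

/-- Lemma 2.4: `T(b̄) ⊆ T(c̄)` iff there is an `L`-homomorphism `φ : A → A`
with `φ (b̄ i) = c̄ i` for all `i`. -/
theorem stmt_3 {L : Language} {A : Type*} [L.Structure A] (n : ℕ)
    (abar : Fin n → A)
    (hgen : Substructure.closure L (Set.range abar) = ⊤)
    (ψ : L.Formula (Fin n))
    (hpreserve : ∀ (M N : Type*) [L.Structure M] [L.Structure N]
      (f : M →[L] N) (v : Fin n → M), ψ.Realize v → ψ.Realize (⇑f ∘ v))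
    (hψa : ψ.Realize abar)
    (hpres : ∀ b : Fin n → A, ψ.Realize b → ∃ φ : A →[L] A, ⇑φ ∘ abar = b)
    (b c : Fin n → A) :
    { t : Fin n → L.Term (Fin n) |
        ∃ d : Fin n → A, ψ.Realize d ∧ ∀ i, b i = (t i).realize d } ⊆
      { t : Fin n → L.Term (Fin n) |
          ∃ d : Fin n → A, ψ.Realize d ∧ ∀ i, c i = (t i).realize d } ↔
    ∃ φ : A →[L] A, ∀ i, φ (b i) = c i := by
  constructor
  · intro hT
    have ht : ∀ i, ∃ t : L.Term (Fin n), t.realize abar = b i := by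
      intro i
      have hb : b i ∈ Substructure.closure L (Set.range abar) := hgen ▸ Substructure.mem_top _
      obtain ⟨t, ht⟩ := Substructure.mem_closure_iff_exists_term.1 hb
      choose g hg using fun x : Set.range abar => x.2
      refine ⟨t.relabel g, ?_⟩
      rw [Term.realize_relabel, ← ht]
      exact congrArg (fun w => t.realize w) (funext hg)
    choose t ht using ht
    obtain ⟨d, hd, hc⟩ := hT ⟨abar, hψa, fun i => (ht i).symm⟩
    obtain ⟨φ, rfl⟩ := hpres d hd
    exact ⟨φ, fun i => by rw [hc i, HomClass.realize_term, ht i]⟩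
  · rintro ⟨φ, hφ⟩ t ⟨d, hd, hb⟩
    exact ⟨φ ∘ d, preserved_endo hpreserve φ d hd,
      fun i => by rw [← hφ i, hb i, HomClass.realize_term]⟩
end

section
/- (Lemma 2.6.) Suppose A is weakly Hopfian. Then for every tuple b̄ : Fin n → A, the following are equivalent: (1) T(ā) = T(b̄); (2) there exists an L-isomorphism β : A ≃ A (an L-Equiv from A to itself) such that β (ā i) = b̄ i for all i. -/
/-!
If `T(ā) = T(b̄)`, the tuple of variables lies in `T(ā)`, hence in `T(b̄)`, which says that `ψ`
holds at `b̄`; so some endomorphism `φ` maps `ā` to `b̄`. Writing `b̄ = t̄(ā)` by generation gives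
`t̄ ∈ T(b̄) = T(ā)`, i.e. `ā = t̄(d̄)` with `ψ` true at `d̄`, and the endomorphism `γ` with
`γ ā = d̄` maps `b̄` to `ā`. Thus `γ ∘ φ` fixes the generators, so `γ` is a left inverse of `φ`;
by weak Hopficity `φ` is bijective, and its inverse `γ` is a homomorphism. The converse is
invariance of formulas and terms under automorphisms.
-/

open FirstOrder Language

/-- Lemma 2.6: if `A` is weakly Hopfian, then `T(ā) = T(b̄)` iff there is an
`L`-isomorphism `β : A ≃ A` with `β (ā i) = b̄ i` for all `i`. -/
theorem stmt_4 {L : Language} {A : Type*} [L.Structure A] (n : ℕ)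
    (abar : Fin n → A)
    (hgen : Substructure.closure L (Set.range abar) = ⊤)
    (ψ : L.Formula (Fin n))
    (hpreserve : ∀ (M N : Type*) [L.Structure M] [L.Structure N]
      (f : M →[L] N) (v : Fin n → M), ψ.Realize v → ψ.Realize (⇑f ∘ v))
    (hψa : ψ.Realize abar)
    (hpres : ∀ b : Fin n → A, ψ.Realize b → ∃ φ : A →[L] A, ⇑φ ∘ abar = b)
    (hwHopf : ∀ φ : A →[L] A, (∃ β : A →[L] A, ⇑β ∘ ⇑φ = id) → Function.Bijective φ)
    (b : Fin n → A) :
    { t : Fin n → L.Term (Fin n) |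
        ∃ d : Fin n → A, ψ.Realize d ∧ ∀ i, abar i = (t i).realize d } =
      { t : Fin n → L.Term (Fin n) |
          ∃ d : Fin n → A, ψ.Realize d ∧ ∀ i, b i = (t i).realize d } ↔
    ∃ β : A ≃[L] A, ∀ i, β (abar i) = b i := by
  constructor
  · intro hT
    have hψb : ψ.Realize b := by
      have h : (fun i => (Term.var i : L.Term (Fin n))) ∈ { t : Fin n → L.Term (Fin n) |
          ∃ d : Fin n → A, ψ.Realize d ∧ ∀ i, abar i = (t i).realize d } :=
        ⟨abar, hψa, fun i => rfl⟩
      rw [hT] at h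
      obtain ⟨d, hd, hbd⟩ := h
      have : b = d := funext hbd
      rwa [this]
    obtain ⟨φ, hφ⟩ := hpres b hψb
    have hterm : ∀ i, ∃ t : L.Term (Fin n), b i = t.realize abar := by
      intro i
      have hmem : b i ∈ Substructure.closure L (Set.range abar) := by
        rw [hgen]; trivial
      obtain ⟨t, ht⟩ := Substructure.mem_closure_iff_exists_term.1 hmem
      -- `t` has variables in `Set.range abar`; each is replaced by an index of that generator.
      choose g hg using fun x : Set.range abar => x.2
      refine ⟨t.relabel g, ?_⟩
      rw [Term.realize_relabel, ← ht]
      congr 1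
      funext x
      exact (hg x).symm
    choose t ht using hterm
    have htT : t ∈ { t : Fin n → L.Term (Fin n) |
        ∃ d : Fin n → A, ψ.Realize d ∧ ∀ i, b i = (t i).realize d } := ⟨abar, hψa, ht⟩
    rw [← hT] at htT
    obtain ⟨d, hd, had⟩ := htT
    obtain ⟨γ, hγ⟩ := hpres d hd
    have hγφ : γ.comp φ = Hom.id L A := by
      refine Hom.eq_of_eqOn_dense hgen ?_
      rintro _ ⟨i, rfl⟩
      have h1 : φ (abar i) = b i := congrFun hφ i
      change γ (φ (abar i)) = abar i
      rw [h1, ht i, ← HomClass.realize_term γ, hγ, ← had i]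
    have hleft : Function.LeftInverse γ φ := fun x => DFunLike.congr_fun hγφ x
    have hbij := hwHopf φ ⟨γ, funext hleft⟩
    have hright : Function.RightInverse γ φ := hleft.rightInverse_of_surjective hbij.2
    refine ⟨⟨⟨φ, γ, hleft, hright⟩, fun f x => φ.map_fun f x, fun r x => ⟨fun h => ?_,
      fun h => φ.map_rel r x h⟩⟩, fun i => congrFun hφ i⟩
    -- `φ` reflects relations because its inverse `γ` preserves them.
    have h2 := γ.map_rel r _ h
    have h3 : ⇑γ ∘ ⇑φ ∘ x = x := funext fun j => hleft (x j)
    exact h3 ▸ h2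
  · rintro ⟨β, hβ⟩
    ext t
    constructor
    · rintro ⟨d, hd, h⟩
      refine ⟨β ∘ d, (StrongHomClass.realize_formula β ψ).2 hd, fun i => ?_⟩
      rw [HomClass.realize_term β, ← h i, hβ i]
    · rintro ⟨d, hd, h⟩
      refine ⟨β.symm ∘ d, (StrongHomClass.realize_formula β.symm ψ).2 hd, fun i => ?_⟩
      rw [HomClass.realize_term β.symm, ← h i, ← hβ i, β.symm_apply_apply]
end

section
/- (Lemma 2.7, with satisfaction of the Π₁-formula Θ unpacked.) Suppose A is weakly Hopfian. Then for every tuple b̄ : Fin n → A, the following are equivalent: (1) ψ realizes at b̄ in A and T(b̄) ⊆ T(ā); (2) there exists an L-isomorphism α : A ≃ A such that α (ā i) = b̄ i for all i. (Condition (1) is exactly satisfaction of the Π₁-formula Θ(x̄) := ψ(x̄) ∧ ⋀_{t̄ ∉ T(ā)} ∀ȳ ¬(ψ(ȳ) ∧ ⋀ᵢ xᵢ = tᵢ(ȳ)) at b̄.) -/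
/-!
If `ψ` holds at `b̄`, the presentation property gives an endomorphism `φ` with `φ ā = b̄`. Since `ā`
generates, `b̄ = t̄(ā)` for a tuple of terms `t̄`, so `t̄ ∈ T(b̄) ⊆ T(ā)` and `ā = t̄(d̄)` for some
`d̄` satisfying `ψ`. The endomorphism `β` with `β ā = d̄` sends `b̄ = t̄(ā)` to `t̄(d̄) = ā`, so `β ∘ φ`
fixes the generators and is the identity. Weak Hopficity makes `φ` bijective; its inverse is the
homomorphism `β`, so `φ` is an isomorphism. Conversely, isomorphisms preserve `ψ` and commute with
terms, so `T` is constant along an automorphism orbit.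
-/

open FirstOrder Language

/-- A homomorphism with a two-sided inverse homomorphism is an isomorphism. Bijectivity alone would
not suffice, since relations must also be reflected. -/
def equivOfInverseHoms {L : Language} {M N : Type*} [L.Structure M] [L.Structure N]
    (f : M →[L] N) (g : N →[L] M) (hgf : Function.LeftInverse g f)
    (hfg : Function.RightInverse g f) : M ≃[L] N where
  toFun := f
  invFun := g
  left_inv := hgf
  right_inv := hfg
  map_fun' F x := f.map_fun F x
  map_rel' R x := by
    refine ⟨fun h => ?_, fun h => f.map_rel R x h⟩
    have h' := g.map_rel R _ h
    have hx : ⇑g ∘ (⇑f ∘ x) = x := funext fun i => hgf (x i)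
    rwa [← hx]

/-- Lemma 2.7, satisfaction of `Θ` unpacked: if `A` is weakly Hopfian, then for
every `b̄`, (`ψ` realizes at `b̄` and `T(b̄) ⊆ T(ā)`) iff there is an `L`-isomorphism
`α : A ≃ A` with `α (ā i) = b̄ i` for all `i`. -/
theorem stmt_5 {L : Language} {A : Type*} [L.Structure A] (n : ℕ)
    (abar : Fin n → A)
    (hgen : Substructure.closure L (Set.range abar) = ⊤)
    (ψ : L.Formula (Fin n))
    (hpreserve : ∀ (M N : Type*) [L.Structure M] [L.Structure N]
      (f : M →[L] N) (v : Fin n → M), ψ.Realize v → ψ.Realize (⇑f ∘ v))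
    (hψa : ψ.Realize abar)
    (hpres : ∀ b : Fin n → A, ψ.Realize b → ∃ φ : A →[L] A, ⇑φ ∘ abar = b)
    (hwHopf : ∀ φ : A →[L] A, (∃ β : A →[L] A, ⇑β ∘ ⇑φ = id) → Function.Bijective φ)
    (b : Fin n → A) :
    (ψ.Realize b ∧
      { t : Fin n → L.Term (Fin n) |
          ∃ d : Fin n → A, ψ.Realize d ∧ ∀ i, b i = (t i).realize d } ⊆
        { t : Fin n → L.Term (Fin n) |
            ∃ d : Fin n → A, ψ.Realize d ∧ ∀ i, abar i = (t i).realize d }) ↔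
    ∃ α : A ≃[L] A, ∀ i, α (abar i) = b i := by
  constructor
  · rintro ⟨hb, hT⟩
    obtain ⟨φ, hφ⟩ := hpres b hb
    have hterm : ∀ x : A, ∃ t : L.Term (Fin n), t.realize abar = x := by
      intro x
      have hx : x ∈ Substructure.closure L (Set.range abar) := hgen ▸ Substructure.mem_top x
      obtain ⟨t, ht⟩ := Substructure.mem_closure_iff_exists_term.1 hx
      -- Replace each variable, an element of the range of `abar`, by an index mapping to it.
      refine ⟨t.relabel fun y => y.2.choose, ?_⟩
      rw [Term.realize_relabel, ← ht]
      congr 1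
      exact funext fun y => y.2.choose_spec
    choose t ht using fun i => hterm (b i)
    obtain ⟨d, hd, had⟩ := hT ⟨abar, hψa, fun i => (ht i).symm⟩
    obtain ⟨β, hβ⟩ := hpres d hd
    have hcomp : β.comp φ = Hom.id L A := by
      refine Hom.eq_of_eqOn_dense hgen ?_
      rintro _ ⟨i, rfl⟩
      have hφi : φ (abar i) = b i := congrFun hφ i
      change β (φ (abar i)) = abar i
      rw [hφi, ← ht i, ← HomClass.realize_term, hβ, ← had i]
    have hleft : Function.LeftInverse β φ := fun x => DFunLike.congr_fun hcomp x
    have hbij := hwHopf φ ⟨β, funext hleft⟩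
    exact ⟨equivOfInverseHoms φ β hleft (hleft.rightInverse_of_surjective hbij.2),
      fun i => congrFun hφ i⟩
  · rintro ⟨α, hα⟩
    have hαb : ⇑α ∘ abar = b := funext hα
    refine ⟨hαb ▸ (StrongHomClass.realize_formula α ψ).2 hψa, ?_⟩
    rintro t ⟨d, hd, hbd⟩
    refine ⟨⇑α.symm ∘ d, (StrongHomClass.realize_formula α.symm ψ).2 hd, fun i => ?_⟩
    rw [HomClass.realize_term, ← hbd i, ← hα i, Language.Equiv.symm_apply_apply]
end

section
/- (Lemma 3.3.) Let G be a group with finite presentation ⟨a | r⟩ and let f : G →* G be an ∃⁺-embedding. Then T(f ∘ a) ⊆ T(a). (This expresses that G satisfies the Π₁-formula Θ at the tuple f(ā).) -/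
/-!
Membership of `w` in `T(b)` says exactly that a certain finite system of equations in unknowns
`c` with parameters `b` is solvable: the relators `r j (c) = 1` together with
`(b i)⁻¹ * w i (c) = 1` (`solvable_iff`). Since an `∃⁺`-embedding reflects solvability of this
system, a solution for the parameters `f ∘ a` yields one for the parameters `a`.
-/

/-- The finite system with unknowns on the left summand and parameters on the right one, whose
solvability at parameters `b` says `w ∈ T(b)`. -/
def tSystem {n m : ℕ} (r : Fin m → FreeGroup (Fin n)) (w : Fin n → List (Fin n × Bool)) :
    Fin (m + n) → FreeGroup (Fin n ⊕ Fin n) :=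
  Fin.append (fun j => FreeGroup.map Sum.inl (r j))
    (fun i => (FreeGroup.of (Sum.inr i))⁻¹ * FreeGroup.map Sum.inl (FreeGroup.mk (w i)))

lemma lift_elim_map_inl {G : Type*} [Group G] {α β : Type*} (c : α → G) (b : β → G)
    (x : FreeGroup α) :
    FreeGroup.lift (Sum.elim c b) (FreeGroup.map Sum.inl x) = FreeGroup.lift c x := by
  have h : (FreeGroup.lift (Sum.elim c b)).comp (FreeGroup.map Sum.inl) = FreeGroup.lift c := by
    ext i
    simp
  exact DFunLike.congr_fun h x

lemma solvable_iff {G : Type*} [Group G] {n m : ℕ} (r : Fin m → FreeGroup (Fin n))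
    (w : Fin n → List (Fin n × Bool)) (b c : Fin n → G) :
    (∀ j, FreeGroup.lift (Sum.elim c b) (tSystem r w j) = 1) ↔
      (∀ j, FreeGroup.lift c (r j) = 1) ∧
        ∀ i, b i = FreeGroup.lift c (FreeGroup.mk (w i)) := by
  rw [Fin.forall_fin_add]
  simp only [tSystem, Fin.append_left, Fin.append_right, map_mul, map_inv, lift_elim_map_inl,
    FreeGroup.lift_apply_of, Sum.elim_inr, inv_mul_eq_one]

/-- Lemma 3.3: if `f : G →* G` is an `∃⁺`-embedding of the finitely presented
group `G = ⟨a | r⟩`, then `T(f ∘ a) ⊆ T(a)`. -/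
theorem stmt_11 (G : Type*) [Group G] (n m : ℕ) (a : Fin n → G)
    (hgen : Subgroup.closure (Set.range a) = ⊤)
    (r : Fin m → FreeGroup (Fin n))
    (hker : (FreeGroup.lift a).ker = Subgroup.normalClosure (Set.range r))
    (f : G →* G)
    (hf : ∀ (k N p : ℕ) (u : Fin N → FreeGroup (Fin k ⊕ Fin p)) (g : Fin p → G),
      (∃ x : Fin k → G, ∀ j, FreeGroup.lift (Sum.elim x g) (u j) = 1) ↔
        (∃ x : Fin k → G, ∀ j, FreeGroup.lift (Sum.elim x (⇑f ∘ g)) (u j) = 1)) :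
    { w : Fin n → List (Fin n × Bool) |
        ∃ c : Fin n → G, (∀ j, FreeGroup.lift c (r j) = 1) ∧
          ∀ i, f (a i) = FreeGroup.lift c (FreeGroup.mk (w i)) } ⊆
      { w : Fin n → List (Fin n × Bool) |
          ∃ c : Fin n → G, (∀ j, FreeGroup.lift c (r j) = 1) ∧
            ∀ i, a i = FreeGroup.lift c (FreeGroup.mk (w i)) } := by
  rintro w ⟨c, hc⟩
  obtain ⟨x, hx⟩ := (hf n (m + n) n (tSystem r w) a).2 ⟨c, (solvable_iff r w (⇑f ∘ a) c).2 hc⟩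
  exact ⟨x, (solvable_iff r w a x).1 hx⟩
end

section
/- (Group version of Lemma 2.7.) Let G be a weakly Hopfian group with finite presentation ⟨a | r⟩. Then for every tuple b : Fin n → G, the following are equivalent: (1) FreeGroup.lift b (r j) = 1 for all j, and T(b) ⊆ T(a); (2) there exists a group automorphism α : G ≃* G such that α (a i) = b i for all i. -/
/-!
A tuple `c` satisfying the relators `r` is the same thing as an endomorphism of `G` sending `a`
to `c` (`exists_endo_of_relators`). For (1) → (2), let `f` send `a` to `b`, and write
`b i = w i (a)` for words `w i`. Then `w ∈ T(b)`, witnessed by `a`, so `w ∈ T(a)`, witnessed by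
some `c`; the endomorphism `g` sending `a` to `c` satisfies `g (b i) = w i (c) = a i`, so it is a
left inverse of `f`, and weak Hopficity makes `f` an automorphism. For (2) → (1), an automorphism
transports both the relators and the witnesses of membership in `T`.
-/

/-- Universal property of the presentation `⟨a | r⟩` of `G`, for maps from `G` to itself. -/
lemma exists_endo_of_relators {G : Type*} [Group G] {n m : ℕ} {a : Fin n → G}
    (hsurj : Function.Surjective (FreeGroup.lift a))
    {r : Fin m → FreeGroup (Fin n)}
    (hker : (FreeGroup.lift a).ker = Subgroup.normalClosure (Set.range r))
    (c : Fin n → G) (hc : ∀ j, FreeGroup.lift c (r j) = 1) :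
    ∃ f : G →* G, ∀ x, f (FreeGroup.lift a x) = FreeGroup.lift c x := by
  have hle : (FreeGroup.lift a).ker ≤ (FreeGroup.lift c).ker := by
    rw [hker]
    apply Subgroup.normalClosure_le_normal
    rintro _ ⟨j, rfl⟩
    exact hc j
  exact ⟨(FreeGroup.lift a).liftOfSurjective hsurj ⟨FreeGroup.lift c, hle⟩,
    fun x => MonoidHom.liftOfRightInverse_comp_apply _ _ _ ⟨FreeGroup.lift c, hle⟩ x⟩

/-- Evaluation of words commutes with homomorphisms. -/
lemma map_freeGroup_lift {G : Type*} [Group G] {n : ℕ} (f : G →* G) {c d : Fin n → G}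
    (h : ∀ i, f (c i) = d i) (x : FreeGroup (Fin n)) :
    f (FreeGroup.lift c x) = FreeGroup.lift d x := by
  have : f.comp (FreeGroup.lift c) = FreeGroup.lift d := by
    ext i
    simp [h]
  exact DFunLike.congr_fun this x

/-- group version of Lemma 2.7: for a weakly Hopfian group with finite
presentation `⟨a | r⟩` and any tuple `b`, `b` satisfies the relators and `T(b) ⊆ T(a)` iff
`b` is in the automorphism orbit of `a`. -/
theorem stmt_12 (G : Type*) [Group G]
    (hwHopf : ∀ f : G →* G, (∃ g : G →* G, g.comp f = MonoidHom.id G) → Function.Bijective f)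
    (n m : ℕ) (a : Fin n → G)
    (hgen : Subgroup.closure (Set.range a) = ⊤)
    (r : Fin m → FreeGroup (Fin n))
    (hker : (FreeGroup.lift a).ker = Subgroup.normalClosure (Set.range r))
    (b : Fin n → G) :
    ((∀ j, FreeGroup.lift b (r j) = 1) ∧
      { w : Fin n → List (Fin n × Bool) |
          ∃ c : Fin n → G, (∀ j, FreeGroup.lift c (r j) = 1) ∧
            ∀ i, b i = FreeGroup.lift c (FreeGroup.mk (w i)) } ⊆
        { w : Fin n → List (Fin n × Bool) |
            ∃ c : Fin n → G, (∀ j, FreeGroup.lift c (r j) = 1) ∧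
              ∀ i, a i = FreeGroup.lift c (FreeGroup.mk (w i)) }) ↔
    ∃ α : G ≃* G, ∀ i, α (a i) = b i := by
  have hsurj : Function.Surjective (FreeGroup.lift a) := by
    rw [← MonoidHom.range_eq_top, FreeGroup.range_lift_eq_closure, hgen]
  have ha : ∀ j, FreeGroup.lift a (r j) = 1 := fun j => by
    have : r j ∈ (FreeGroup.lift a).ker := by
      rw [hker]
      exact Subgroup.subset_normalClosure ⟨j, rfl⟩
    exact this
  constructor
  · rintro ⟨hb, hT⟩
    obtain ⟨f, hf⟩ := exists_endo_of_relators hsurj hker b hb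
    choose x hx using fun i => hsurj (b i)
    obtain ⟨c, hc, hac⟩ := hT (a := fun i => (x i).toWord)
      ⟨a, ha, fun i => by rw [FreeGroup.mk_toWord, hx]⟩
    obtain ⟨g, hg⟩ := exists_endo_of_relators hsurj hker c hc
    have hfa : ∀ i, f (a i) = b i := fun i => by simpa using hf (FreeGroup.of i)
    have hgf : g.comp f = MonoidHom.id G := by
      apply MonoidHom.eq_of_eqOn_dense hgen
      rintro _ ⟨i, rfl⟩
      have h := hac i
      rw [FreeGroup.mk_toWord, ← hg, hx] at h
      simp [hfa, ← h]
    exact ⟨MulEquiv.ofBijective f (hwHopf f ⟨g, hgf⟩), hfa⟩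
  · rintro ⟨α, hα⟩
    refine ⟨fun j => ?_, ?_⟩
    · rw [← map_freeGroup_lift α.toMonoidHom hα, ha, map_one]
    · rintro w ⟨c, hc, hbc⟩
      have key := map_freeGroup_lift α.symm.toMonoidHom (c := c) (fun i => rfl)
      refine ⟨fun i => α.symm.toMonoidHom (c i), fun j => ?_, fun i => ?_⟩
      · rw [← key, hc, map_one]
      · rw [← key, ← hbc, ← hα]
        simp
end

section
/- (Bridge step in the proof of Theorem 1.7.) Let G be a weakly Hopfian group with finite presentation ⟨a | r⟩, and let f : G →* G be a group endomorphism such that T(f ∘ a) ⊆ T(a). Then f is an automorphism of G (i.e. f is bijective). -/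
/-!
Since `a` generates `G`, each `f (a i)` is the value at `a` of some word `w i`, so `w ∈ T(f ∘ a)`.
The inclusion gives a tuple `c` satisfying the relators with `a i = ev(c, w i)`. As `⟨a | r⟩`
presents `G`, there is an endomorphism `g` with `g ∘ a = c`, and then
`g (f (a i)) = ev(c, w i) = a i`, so `g` is a left inverse of `f` and weak Hopficity applies.
-/

/-- bridge step in the proof of Theorem 1.7: for a weakly Hopfian group with
finite presentation `⟨a | r⟩`, if `f : G →* G` satisfies `T(f ∘ a) ⊆ T(a)`, then `f` is an
automorphism. -/
theorem stmt_13 (G : Type*) [Group G]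
    (hwHopf : ∀ f : G →* G, (∃ g : G →* G, g.comp f = MonoidHom.id G) → Function.Bijective f)
    (n m : ℕ) (a : Fin n → G)
    (hgen : Subgroup.closure (Set.range a) = ⊤)
    (r : Fin m → FreeGroup (Fin n))
    (hker : (FreeGroup.lift a).ker = Subgroup.normalClosure (Set.range r))
    (f : G →* G)
    (hT : { w : Fin n → List (Fin n × Bool) |
            ∃ c : Fin n → G, (∀ j, FreeGroup.lift c (r j) = 1) ∧
              ∀ i, f (a i) = FreeGroup.lift c (FreeGroup.mk (w i)) } ⊆
          { w : Fin n → List (Fin n × Bool) |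
              ∃ c : Fin n → G, (∀ j, FreeGroup.lift c (r j) = 1) ∧
                ∀ i, a i = FreeGroup.lift c (FreeGroup.mk (w i)) }) :
    Function.Bijective f := by
  have hsurj : Function.Surjective (FreeGroup.lift a) := by
    rw [← MonoidHom.range_eq_top, FreeGroup.range_lift_eq_closure, hgen]
  choose u hu using fun i => hsurj (f (a i))
  obtain ⟨c, hc, hac⟩ := hT (show (fun i => (u i).toWord) ∈ _ from
    ⟨a, fun j => by
      rw [← MonoidHom.mem_ker, hker]
      exact Subgroup.subset_normalClosure ⟨j, rfl⟩,
     fun i => by rw [FreeGroup.mk_toWord, hu]⟩)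
  simp only [FreeGroup.mk_toWord] at hac
  have hle : (FreeGroup.lift a).ker ≤ (FreeGroup.lift c).ker := by
    rw [hker]
    apply Subgroup.normalClosure_le_normal
    rintro _ ⟨j, rfl⟩
    exact hc j
  -- The endomorphism of `G` determined by `a ↦ c`.
  let g : G →* G := (FreeGroup.lift a).liftOfSurjective hsurj ⟨FreeGroup.lift c, hle⟩
  have hg : ∀ x, g (FreeGroup.lift a x) = FreeGroup.lift c x := fun x =>
    MonoidHom.liftOfRightInverse_comp_apply _ _ (Function.rightInverse_surjInv hsurj)
      ⟨FreeGroup.lift c, hle⟩ x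
  refine hwHopf f ⟨g, MonoidHom.eq_of_eqOn_dense hgen ?_⟩
  rintro _ ⟨i, rfl⟩
  simp only [MonoidHom.comp_apply, MonoidHom.id_apply]
  rw [← hu, hg, ← hac]
end

section
/- (Group version of Lemma 2.8.) Let G be a Hopfian group with finite presentation ⟨a | r⟩. Then for every word-tuple w : Fin n → List (Fin n × Bool): w ∈ T(a) if and only if there exists a group automorphism α : G ≃* G such that α (a i) = ev(a, w i) for all i. -/
/-!
A tuple `c` satisfying the relators `r` is the same thing as an endomorphism `f` of `G` with
`f (a i) = c i`. The condition `a i = ev(c, w i)` then says `f (ev(a, w i)) = a i`, so the image of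
`f` contains the generators and `f` is onto; by the Hopf property `f` is an automorphism, and its
inverse sends `a i` to `ev(a, w i)`. Conversely, given `α`, the tuple `c i = α⁻¹ (a i)` works.
-/

/-- group version of Lemma 2.8: for a Hopfian group with finite presentation
`⟨a | r⟩`, a word-tuple `w` lies in `T(a)` iff the assignment `a i ↦ ev(a, w i)` is realized
by an automorphism of `G`. -/
theorem stmt_14 (G : Type*) [Group G]
    (hHopf : ∀ f : G →* G, Function.Surjective f → Function.Bijective f)
    (n m : ℕ) (a : Fin n → G)
    (hgen : Subgroup.closure (Set.range a) = ⊤)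
    (r : Fin m → FreeGroup (Fin n))
    (hker : (FreeGroup.lift a).ker = Subgroup.normalClosure (Set.range r))
    (w : Fin n → List (Fin n × Bool)) :
    (∃ c : Fin n → G, (∀ j, FreeGroup.lift c (r j) = 1) ∧
        ∀ i, a i = FreeGroup.lift c (FreeGroup.mk (w i))) ↔
      ∃ α : G ≃* G, ∀ i, α (a i) = FreeGroup.lift a (FreeGroup.mk (w i)) := by
  have lift_comp (f : G →* G) (x : FreeGroup (Fin n)) :
      FreeGroup.lift (fun i => f (a i)) x = f (FreeGroup.lift a x) := by
    have h : FreeGroup.lift (fun i => f (a i)) = f.comp (FreeGroup.lift a) := by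
      ext i
      simp
    exact DFunLike.congr_fun h x
  have hr (j : Fin m) : FreeGroup.lift a (r j) = 1 := by
    rw [← MonoidHom.mem_ker, hker]
    exact Subgroup.subset_normalClosure ⟨j, rfl⟩
  constructor
  · rintro ⟨c, hc, hw⟩
    have hsurj : Function.Surjective (FreeGroup.lift a) := by
      rw [← MonoidHom.range_eq_top, FreeGroup.range_lift_eq_closure, hgen]
    have hle : (FreeGroup.lift a).ker ≤ (FreeGroup.lift c).ker := by
      rw [hker]
      apply Subgroup.normalClosure_le_normal
      rintro _ ⟨j, rfl⟩
      exact hc j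
    obtain ⟨f, hf⟩ : ∃ f : G →* G, ∀ x, f (FreeGroup.lift a x) = FreeGroup.lift c x :=
      ⟨(FreeGroup.lift a).liftOfSurjective hsurj ⟨FreeGroup.lift c, hle⟩,
        fun x => MonoidHom.liftOfRightInverse_comp_apply _ _ _ _ x⟩
    have hfw (i : Fin n) : f (FreeGroup.lift a (FreeGroup.mk (w i))) = a i := by
      rw [hf, ← hw]
    have hfsurj : Function.Surjective f := by
      rw [← MonoidHom.range_eq_top, eq_top_iff, ← hgen, Subgroup.closure_le]
      rintro _ ⟨i, rfl⟩
      exact ⟨_, hfw i⟩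
    refine ⟨(MulEquiv.ofBijective f (hHopf f hfsurj)).symm, fun i => ?_⟩
    rw [MulEquiv.symm_apply_eq]
    exact (hfw i).symm
  · rintro ⟨α, hα⟩
    refine ⟨fun i => α.symm.toMonoidHom (a i), fun j => ?_, fun i => ?_⟩
    · rw [lift_comp, hr, map_one]
    · rw [lift_comp, ← hα]
      exact (α.symm_apply_apply (a i)).symm
end
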